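/- Suppose ℒ = (H_i)_{i∈ℕ} is countably infinite and π is countably additive on 𝒜_ℒ (π(∪_n A_n) = Σ_n π(A_n) whenever the A_n ∈ 𝒜_ℒ are pairwise disjoint with ∪_n A_n ∈ 𝒜_ℒ). Then for every F ∈ 𝒜 one has P^j_*(F) = P^{j*}(F) = Σ_{i=1}^∞ σ(F|H_i)·π(H_i); in particular all elements of 𝒫 agree on 𝒜 × {Ω} and F ↦ Σ_i σ(F|H_i)π(H_i) is a finitely additive probability on 𝒜. If moreover σ(·|H_i) is countably additive on 𝒜 for every i, then this probability is countably additive on 𝒜. -/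

import Mathlib

/-!
Write `μ F = ∑ᵢ σ(F|Hᵢ) π(Hᵢ)`. Every `P ∈ 𝒫` satisfies `P(F ∩ Hᵢ|Ω) = π(Hᵢ) σ(F|Hᵢ)`, so finite
additivity gives `μ F ≤ P(F|Ω)` and `μ Fᶜ ≤ P(Fᶜ|Ω)`. Countable additivity of `π` gives
`∑ᵢ π(Hᵢ) = 1`, so both sides of the two inequalities have total mass `1`, and they are equalities.

Equality of the envelopes with `μ` also requires `𝒫` to be nonempty (Dubins' theorem), which is
proved in `FCPSet_nonempty`. For `ε > 0` and a finite set `S` of points, consider the finitely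
additive measure
`m_{ε,S}(A) = μ A + ε ∑ᵢ 2⁻ⁱ σ(A|Hᵢ) + ε² |S ∩ A| / |S|`.
Along `ε → 0⁺` and `S` increasing it is eventually positive on each nonempty set, so that the limits
of `m(A ∩ K) / m(K)` along an ultrafilter define a full conditional probability
(`exists_fcp_of_tendsto`). For `K = Ω` the limit is `μ`. For `K = Hᵢ` the first two terms are
exactly proportional to `σ(·|Hᵢ)` with total mass at least `ε 2⁻ⁱ`, which dominates the `ε²` term,
so the limit is `σ(·|Hᵢ)`.

Countable additivity of `μ` is the interchange of two sums of nonnegative terms.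
-/

open Set

open scoped Classical

variable {Ω : Type*}

/-- A field of sets on `Ω`: contains `univ`, closed under complements and finite unions. -/
def IsSetField (𝒜 : Set (Set Ω)) : Prop :=
  Set.univ ∈ 𝒜 ∧ (∀ A ∈ 𝒜, Aᶜ ∈ 𝒜) ∧ ∀ A ∈ 𝒜, ∀ B ∈ 𝒜, A ∪ B ∈ 𝒜

/-- A finitely additive probability on the field `𝒜`. -/
def IsFAP (𝒜 : Set (Set Ω)) (P : Set Ω → ℝ) : Prop :=
  (∀ A ∈ 𝒜, 0 ≤ P A ∧ P A ≤ 1) ∧ P Set.univ = 1 ∧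
    ∀ A ∈ 𝒜, ∀ B ∈ 𝒜, Disjoint A B → P (A ∪ B) = P A + P B

/-- A partition of `Ω` into nonempty pairwise disjoint pieces. -/
def IsPartition {ι : Type*} (H : ι → Set Ω) : Prop :=
  (∀ i, (H i).Nonempty) ∧ (Pairwise fun i j => Disjoint (H i) (H j)) ∧
    (⋃ i, H i) = Set.univ

/-- A field containing every member of the partition `H` and whose members are
unions of members of the partition. -/
def IsFieldOver {ι : Type*} (H : ι → Set Ω) (𝒜L : Set (Set Ω)) : Prop :=
  IsSetField 𝒜L ∧ (∀ i, H i ∈ 𝒜L) ∧ ∀ A ∈ 𝒜L, ∃ S : Set ι, A = ⋃ i ∈ S, H i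

/-- A field containing `𝒜L ∪ 𝒜E` whose members are unions of the atoms `H i ∩ E j`. -/
def IsJointField {ι κ : Type*} (H : ι → Set Ω) (E : κ → Set Ω)
    (𝒜L 𝒜E 𝒜 : Set (Set Ω)) : Prop :=
  IsSetField 𝒜 ∧ 𝒜L ⊆ 𝒜 ∧ 𝒜E ⊆ 𝒜 ∧
    ∀ A ∈ 𝒜, ∃ S : Set (ι × κ), A = ⋃ p ∈ S, H p.1 ∩ E p.2

/-- A strategy on `𝒜 × ℒ`: each `σ (·|H i)` is a finitely additive probability on `𝒜`
equal to `1` on events implied by `H i`. -/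
def IsStrategy {ι : Type*} (𝒜 : Set (Set Ω)) (H : ι → Set Ω) (σ : Set Ω → ι → ℝ) : Prop :=
  ∀ i, IsFAP 𝒜 (fun F => σ F i) ∧ ∀ F ∈ 𝒜, H i ⊆ F → σ F i = 1

/-- A full conditional probability on the field `𝒜` (conditions (C1), (C2), (C3)). -/
def IsFCP (𝒜 : Set (Set Ω)) (P : Set Ω → Set Ω → ℝ) : Prop :=
  (∀ E ∈ 𝒜, ∀ K ∈ 𝒜, K.Nonempty → P E K = P (E ∩ K) K) ∧
  (∀ K ∈ 𝒜, K.Nonempty → IsFAP 𝒜 fun E => P E K) ∧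
  ∀ E ∈ 𝒜, ∀ F ∈ 𝒜, ∀ K ∈ 𝒜, K.Nonempty → (E ∩ K).Nonempty →
    P (E ∩ F) K = P E K * P F (E ∩ K)

/-- `P` extends the prior `π` on `𝒜L` and the strategy `σ` on `𝒜 × ℒ`. -/
def ExtendsPriorStrategy {ι : Type*} (𝒜 𝒜L : Set (Set Ω)) (H : ι → Set Ω)
    (π : Set Ω → ℝ) (σ : Set Ω → ι → ℝ) (P : Set Ω → Set Ω → ℝ) : Prop :=
  (∀ B ∈ 𝒜L, P B Set.univ = π B) ∧ ∀ F ∈ 𝒜, ∀ i, P F (H i) = σ F i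

/-- The set `𝒫` of full conditional probabilities on `𝒜` extending `{π, σ}`. -/
def FCPSet {ι : Type*} (𝒜 𝒜L : Set (Set Ω)) (H : ι → Set Ω)
    (π : Set Ω → ℝ) (σ : Set Ω → ι → ℝ) : Set (Set Ω → Set Ω → ℝ) :=
  {P | IsFCP 𝒜 P ∧ ExtendsPriorStrategy 𝒜 𝒜L H π σ P}

/-- Lower envelope of a set of conditional probabilities at `F|K`. -/
noncomputable def lowEnv (Ps : Set (Set Ω → Set Ω → ℝ)) (F K : Set Ω) : ℝ :=
  sInf ((fun P => P F K) '' Ps)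

/-- Upper envelope of a set of conditional probabilities at `F|K`. -/
noncomputable def upEnv (Ps : Set (Set Ω → Set Ω → ℝ)) (F K : Set Ω) : ℝ :=
  sSup ((fun P => P F K) '' Ps)

/-- A finite partition of `Ω` contained in `𝒜L`. -/
def IsFinPart (𝒜L : Set (Set Ω)) (T : Finset (Set Ω)) : Prop :=
  (↑T : Set (Set Ω)) ⊆ 𝒜L ∧ (∀ A ∈ T, (A : Set Ω).Nonempty) ∧
    (∀ A ∈ T, ∀ B ∈ T, A ≠ B → Disjoint A B) ∧ ⋃₀ (↑T : Set (Set Ω)) = Set.univ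

/-- Lower Stieltjes integral of `X : ℒ → ℝ` with respect to `μ` on `𝒜L`. -/
noncomputable def lowerSInt {ι : Type*} (H : ι → Set Ω) (𝒜L : Set (Set Ω))
    (X : ι → ℝ) (μ : Set Ω → ℝ) : ℝ :=
  sSup {x | ∃ T : Finset (Set Ω), IsFinPart 𝒜L T ∧
    x = ∑ A ∈ T, sInf {y | ∃ i, H i ⊆ A ∧ y = X i} * μ A}

/-- Upper Stieltjes integral of `X : ℒ → ℝ` with respect to `μ` on `𝒜L`. -/
noncomputable def upperSInt {ι : Type*} (H : ι → Set Ω) (𝒜L : Set (Set Ω))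
    (X : ι → ℝ) (μ : Set Ω → ℝ) : ℝ :=
  sInf {x | ∃ T : Finset (Set Ω), IsFinPart 𝒜L T ∧
    x = ∑ A ∈ T, sSup {y | ∃ i, H i ⊆ A ∧ y = X i} * μ A}

/-- `𝒜L`-continuity of a bounded function `X : ℒ → ℝ`. -/
def ALContinuous {ι : Type*} (H : ι → Set Ω) (𝒜L : Set (Set Ω)) (X : ι → ℝ) : Prop :=
  (∃ M : ℝ, ∀ i, |X i| ≤ M) ∧ ∀ t : ℝ, ∀ ε > (0 : ℝ), ∃ A ∈ 𝒜L,
    (⋃ i ∈ {i | t + ε ≤ X i}, H i) ⊆ A ∧ A ⊆ ⋃ i ∈ {i | t ≤ X i}, H i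

/-- Countable additivity of `P` on the field `𝒜`. -/
def CountablyAdditiveOn (𝒜 : Set (Set Ω)) (P : Set Ω → ℝ) : Prop :=
  ∀ A : ℕ → Set Ω, (∀ n, A n ∈ 𝒜) → (Pairwise fun m n => Disjoint (A m) (A n)) →
    (⋃ n, A n) ∈ 𝒜 → HasSum (fun n => P (A n)) (P (⋃ n, A n))

/-- A (normalized) capacity on the field `𝒜`. -/
def IsCapacity (𝒜 : Set (Set Ω)) (φ : Set Ω → ℝ) : Prop :=
  φ ∅ = 0 ∧ φ Set.univ = 1 ∧ (∀ A ∈ 𝒜, 0 ≤ φ A ∧ φ A ≤ 1) ∧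
    ∀ A ∈ 𝒜, ∀ B ∈ 𝒜, A ⊆ B → φ A ≤ φ B

/-- Total monotonicity of a capacity `φ` on the field `𝒜`. -/
def TotallyMonotone (𝒜 : Set (Set Ω)) (φ : Set Ω → ℝ) : Prop :=
  ∀ n : ℕ, 2 ≤ n → ∀ A : Fin n → Set Ω, (∀ i, A i ∈ 𝒜) →
    ∑ s ∈ Finset.univ.powerset.filter (fun s : Finset (Fin n) => s.Nonempty),
      (-1 : ℝ) ^ (s.card - 1) * φ (⋂ i ∈ s, A i) ≤ φ (⋃ i, A i)

/-- Restriction of a conditional probability to the domain `𝒜 × ℬ⁰`, viewed as a point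
of the product space `ℝ^(𝒜 × ℬ⁰)`. -/
def restrictPairs (𝒜 ℬ : Set (Set Ω)) (Q : Set Ω → Set Ω → ℝ)
    (p : {p : Set Ω × Set Ω // p.1 ∈ 𝒜 ∧ p.2 ∈ ℬ ∧ p.2.Nonempty}) : ℝ :=
  Q p.val.1 p.val.2

/-- Restriction of a set function to the domain `𝒜`, viewed as a point of `ℝ^𝒜`. -/
def restrictDom (𝒜 : Set (Set Ω)) (μ : Set Ω → ℝ) (A : {A : Set Ω // A ∈ 𝒜}) : ℝ :=
  μ A.val

/-- The field of all unions of members of the partition `H`, i.e. `⟨ℒ⟩*`. -/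
def unionsOf {ι : Type*} (H : ι → Set Ω) : Set (Set Ω) :=
  {A | ∃ S : Set ι, A = ⋃ i ∈ S, H i}

/-- The set `𝒬^fd` of fully ℒ-disintegrable full conditional probabilities on `𝒜`
extending `{π, σ}`. -/
def QfdSet {ι : Type*} (𝒜 𝒜L : Set (Set Ω)) (H : ι → Set Ω)
    (π : Set Ω → ℝ) (σ : Set Ω → ι → ℝ) : Set (Set Ω → Set Ω → ℝ) :=
  {Q | IsFCP 𝒜 Q ∧ ExtendsPriorStrategy 𝒜 𝒜L H π σ Q ∧
    ∀ F ∈ 𝒜, ∀ K ∈ 𝒜L, K.Nonempty →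
      Q F K = lowerSInt H 𝒜L (fun i => σ F i) fun B => Q B K}

/-- The set `𝒬^fsc` of fully strongly ℒ-conglomerable full conditional probabilities
on `𝒜` extending `{π, σ}`. -/
def QfscSet {ι : Type*} (𝒜 𝒜L : Set (Set Ω)) (H : ι → Set Ω)
    (π : Set Ω → ℝ) (σ : Set Ω → ι → ℝ) : Set (Set Ω → Set Ω → ℝ) :=
  {Q | IsFCP 𝒜 Q ∧ ExtendsPriorStrategy 𝒜 𝒜L H π σ Q ∧
    ∀ F ∈ 𝒜, ∀ K ∈ 𝒜L, K.Nonempty → ∀ B ∈ 𝒜L, B.Nonempty → B ⊆ K →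
      Q B K * sInf {x | ∃ i, H i ⊆ B ∧ x = σ F i} ≤ Q (F ∩ B) K ∧
      Q (F ∩ B) K ≤ Q B K * sSup {x | ∃ i, H i ⊆ B ∧ x = σ F i}}

/-- The set `𝒫^sc` of strongly ℒ-conglomerable joint probabilities consistent with `{π, σ}`. -/
def PscSet {ι : Type*} (𝒜 𝒜L : Set (Set Ω)) (H : ι → Set Ω)
    (π : Set Ω → ℝ) (σ : Set Ω → ι → ℝ) : Set (Set Ω → ℝ) :=
  {μ | (∃ P ∈ FCPSet 𝒜 𝒜L H π σ, μ = fun F => P F Set.univ) ∧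
    ∀ F ∈ 𝒜, ∀ B ∈ 𝒜L, B.Nonempty →
      π B * sInf {x | ∃ i, H i ⊆ B ∧ x = σ F i} ≤ μ (F ∩ B) ∧
      μ (F ∩ B) ≤ π B * sSup {x | ∃ i, H i ⊆ B ∧ x = σ F i}}

/-- The set `𝒫^fd` of fully ℒ-disintegrable conditional probabilities on `𝒜 × 𝒜L⁰`
extending `{π, σ}`. -/
def PfdSet {ι : Type*} (𝒜 𝒜L : Set (Set Ω)) (H : ι → Set Ω)
    (π : Set Ω → ℝ) (σ : Set Ω → ι → ℝ) : Set (Set Ω → Set Ω → ℝ) :=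
  {P | (∀ E ∈ 𝒜, ∀ K ∈ 𝒜L, K.Nonempty → P E K = P (E ∩ K) K) ∧
    (∀ K ∈ 𝒜L, K.Nonempty → IsFAP 𝒜 fun E => P E K) ∧
    (∀ E ∈ 𝒜, ∀ F ∈ 𝒜, ∀ K ∈ 𝒜L, K.Nonempty → E ∩ K ∈ 𝒜L → (E ∩ K).Nonempty →
      P (E ∩ F) K = P E K * P F (E ∩ K)) ∧
    (∀ B ∈ 𝒜L, P B Set.univ = π B) ∧ (∀ F ∈ 𝒜, ∀ i, P F (H i) = σ F i) ∧
    ∀ F ∈ 𝒜, ∀ K ∈ 𝒜L, K.Nonempty →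
      P F K = lowerSInt H 𝒜L (fun i => σ F i) fun B => P B K}

/-- The Choquet integral `C∫ X dφ = ∫₀¹ φ₊((X ≥ t)) dt` of a `[0,1]`-valued `X : ℒ → ℝ`
with respect to a capacity `φ` on `𝒜L`, where `φ₊` is the inner extension of `φ`. -/
noncomputable def choquetInt {ι : Type*} (H : ι → Set Ω) (𝒜L : Set (Set Ω))
    (X : ι → ℝ) (φ : Set Ω → ℝ) : ℝ :=
  ∫ t in (0 : ℝ)..(1 : ℝ),
    sSup {y | ∃ B ∈ 𝒜L, B ⊆ (⋃ i ∈ {i | t ≤ X i}, H i) ∧ y = φ B}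

open Filter Topology

/-! ### Fields of sets and finitely additive probabilities -/

lemma IsSetField.empty_mem {𝒜 : Set (Set Ω)} (h : IsSetField 𝒜) : (∅ : Set Ω) ∈ 𝒜 := by
  simpa using h.2.1 _ h.1

lemma IsSetField.inter_mem {𝒜 : Set (Set Ω)} (h : IsSetField 𝒜) {A B : Set Ω}
    (hA : A ∈ 𝒜) (hB : B ∈ 𝒜) : A ∩ B ∈ 𝒜 := by
  have := h.2.1 _ (h.2.2 _ (h.2.1 _ hA) _ (h.2.1 _ hB))
  simpa [Set.compl_union] using this

lemma IsFAP.empty {𝒜 : Set (Set Ω)} (h : IsSetField 𝒜) {P : Set Ω → ℝ} (hP : IsFAP 𝒜 P) :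
    P ∅ = 0 := by
  have := hP.2.2 _ h.empty_mem _ h.empty_mem (by simp)
  rw [Set.union_empty] at this
  linarith

lemma IsFAP.compl {𝒜 : Set (Set Ω)} (h : IsSetField 𝒜) {P : Set Ω → ℝ} (hP : IsFAP 𝒜 P)
    {A : Set Ω} (hA : A ∈ 𝒜) : P A + P Aᶜ = 1 := by
  rw [← hP.2.2 _ hA _ (h.2.1 _ hA) disjoint_compl_right, Set.union_compl_self, hP.2.1]

lemma IsFAP.mono {𝒜 : Set (Set Ω)} (h : IsSetField 𝒜) {P : Set Ω → ℝ} (hP : IsFAP 𝒜 P)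
    {A B : Set Ω} (hA : A ∈ 𝒜) (hB : B ∈ 𝒜) (hAB : A ⊆ B) : P A ≤ P B := by
  have hd : B ∩ Aᶜ ∈ 𝒜 := h.inter_mem hB (h.2.1 _ hA)
  have h1 := hP.2.2 _ hA _ hd (Set.disjoint_left.2 fun x hx hx' => hx'.2 hx)
  have h2 : A ∪ B ∩ Aᶜ = B := by
    ext x
    have := @hAB x
    simp only [Set.mem_union, Set.mem_inter_iff, Set.mem_compl_iff]
    tauto
  rw [h2] at h1
  linarith [(hP.1 _ hd).1]

lemma IsFAP.sum_inter_le {𝒜 : Set (Set Ω)} (h : IsSetField 𝒜) {P : Set Ω → ℝ}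
    (hP : IsFAP 𝒜 P) {H : ℕ → Set Ω} (hH : IsPartition H) (hHm : ∀ i, H i ∈ 𝒜) {F : Set Ω}
    (hF : F ∈ 𝒜) (s : Finset ℕ) : ∑ i ∈ s, P (H i ∩ F) ≤ P F := by
  have key : (⋃ i ∈ s, H i ∩ F) ∈ 𝒜 ∧ P (⋃ i ∈ s, H i ∩ F) = ∑ i ∈ s, P (H i ∩ F) := by
    induction s using Finset.induction_on with
    | empty => simpa using ⟨h.empty_mem, hP.empty h⟩
    | insert a s ha ih =>
      rw [Finset.set_biUnion_insert, Finset.sum_insert ha, ← ih.2]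
      refine ⟨h.2.2 _ (h.inter_mem (hHm a) hF) _ ih.1,
        hP.2.2 _ (h.inter_mem (hHm a) hF) _ ih.1 ?_⟩
      simp only [Set.disjoint_iUnion_right]
      intro i hi
      have hne : a ≠ i := fun e => ha (e ▸ hi)
      exact (hH.2.1 hne).mono Set.inter_subset_left Set.inter_subset_left
  rw [← key.2]
  exact hP.mono h key.1 hF (by simp)

/-! ### Strategies and their mixtures -/

lemma IsStrategy.eq_zero {𝒜 : Set (Set Ω)} (h : IsSetField 𝒜) {H : ℕ → Set Ω}
    {σ : Set Ω → ℕ → ℝ} (hσ : IsStrategy 𝒜 H σ) {i : ℕ} {F : Set Ω} (hF : F ∈ 𝒜)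
    (hd : Disjoint (H i) F) : σ F i = 0 := by
  have h1 := (hσ i).1.compl h hF
  have h2 := (hσ i).2 _ (h.2.1 _ hF) hd.subset_compl_right
  linarith

lemma IsStrategy.inter_eq {𝒜 : Set (Set Ω)} (h : IsSetField 𝒜) {H : ℕ → Set Ω}
    {σ : Set Ω → ℕ → ℝ} (hσ : IsStrategy 𝒜 H σ) (hHm : ∀ i, H i ∈ 𝒜) {i : ℕ} {F : Set Ω}
    (hF : F ∈ 𝒜) : σ (F ∩ H i) i = σ F i := by
  have hd : F ∩ (H i)ᶜ ∈ 𝒜 := h.inter_mem hF (h.2.1 _ (hHm i))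
  have h1 := (hσ i).1.2.2 _ (h.inter_mem hF (hHm i)) _ hd
    (Set.disjoint_left.2 fun x hx hx' => hx'.2 hx.2)
  have h2 := hσ.eq_zero h hd (Set.disjoint_left.2 fun x hx hx' => hx'.2 hx)
  simp only [Set.inter_union_compl] at h1
  linarith

lemma IsStrategy.summable {𝒜 : Set (Set Ω)} {H : ℕ → Set Ω}
    {σ : Set Ω → ℕ → ℝ} (hσ : IsStrategy 𝒜 H σ) {w : ℕ → ℝ} (hw : Summable w)
    (hw0 : ∀ i, 0 ≤ w i) {F : Set Ω} (hF : F ∈ 𝒜) : Summable fun i => σ F i * w i :=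
  hw.of_nonneg_of_le (fun i => mul_nonneg ((hσ i).1.1 _ hF).1 (hw0 i))
    fun i => mul_le_of_le_one_left (hw0 i) ((hσ i).1.1 _ hF).2

lemma IsStrategy.tsum_nonneg {𝒜 : Set (Set Ω)} {H : ℕ → Set Ω}
    {σ : Set Ω → ℕ → ℝ} (hσ : IsStrategy 𝒜 H σ) {w : ℕ → ℝ}
    (hw0 : ∀ i, 0 ≤ w i) {F : Set Ω} (hF : F ∈ 𝒜) : 0 ≤ ∑' i, σ F i * w i :=
  _root_.tsum_nonneg fun i => mul_nonneg ((hσ i).1.1 _ hF).1 (hw0 i)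

lemma IsStrategy.tsum_union {𝒜 : Set (Set Ω)} {H : ℕ → Set Ω}
    {σ : Set Ω → ℕ → ℝ} (hσ : IsStrategy 𝒜 H σ) {w : ℕ → ℝ} (hw : Summable w)
    (hw0 : ∀ i, 0 ≤ w i) {A B : Set Ω} (hA : A ∈ 𝒜) (hB : B ∈ 𝒜) (hd : Disjoint A B) :
    ∑' i, σ (A ∪ B) i * w i = ∑' i, σ A i * w i + ∑' i, σ B i * w i := by
  rw [← (hσ.summable hw hw0 hA).tsum_add (hσ.summable hw hw0 hB)]
  refine tsum_congr fun i => ?_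
  have := (hσ i).1.2.2 _ hA _ hB hd
  simp only at this
  rw [this, add_mul]

lemma IsStrategy.tsum_inter {𝒜 : Set (Set Ω)} (h : IsSetField 𝒜) {H : ℕ → Set Ω}
    (hH : IsPartition H) {σ : Set Ω → ℕ → ℝ} (hσ : IsStrategy 𝒜 H σ) (hHm : ∀ i, H i ∈ 𝒜)
    (w : ℕ → ℝ) {F : Set Ω} (hF : F ∈ 𝒜) (i : ℕ) :
    ∑' j, σ (F ∩ H i) j * w j = σ F i * w i := by
  rw [tsum_eq_single i, hσ.inter_eq h hHm hF]
  intro j hj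
  rw [hσ.eq_zero h (h.inter_mem hF (hHm i)) ((hH.2.1 hj).mono_right Set.inter_subset_right),
    zero_mul]

/-- A countably additive prior is recovered from its values on the `H i`; for `B ∈ 𝒜L` the number
`σ B i` is the indicator of `H i ⊆ B`. -/
lemma hasSum_prior {𝒜 𝒜L : Set (Set Ω)} (h : IsSetField 𝒜) {H : ℕ → Set Ω}
    (hH : IsPartition H) (h𝒜L : IsFieldOver H 𝒜L) (hsub : 𝒜L ⊆ 𝒜) {π : Set Ω → ℝ}
    (hπ : IsFAP 𝒜L π) (hπc : CountablyAdditiveOn 𝒜L π) {σ : Set Ω → ℕ → ℝ}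
    (hσ : IsStrategy 𝒜 H σ) {B : Set Ω} (hB : B ∈ 𝒜L) :
    HasSum (fun i => σ B i * π (H i)) (π B) := by
  obtain ⟨S, rfl⟩ := h𝒜L.2.2 B hB
  have hU : (⋃ n, if n ∈ S then H n else ∅) = ⋃ i ∈ S, H i := by
    refine Set.iUnion_congr fun n => ?_
    by_cases hn : n ∈ S <;> simp [hn]
  have := hπc (fun n => if n ∈ S then H n else ∅) ?_ ?_ (by rw [hU]; exact hB)
  · rw [hU] at this
    refine this.congr_fun fun n => ?_
    by_cases hn : n ∈ S
    · have h1 := (hσ n).2 _ (hsub hB) (Set.subset_biUnion_of_mem (u := H) hn)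
      simp only [hn, if_true, h1, one_mul]
    · have h1 := hσ.eq_zero (i := n) h (hsub hB) (by
        simp only [Set.disjoint_iUnion_right]
        intro i hi
        have hne : n ≠ i := fun e => hn (e ▸ hi)
        exact hH.2.1 hne)
      simp only [hn, if_false, h1, zero_mul, hπ.empty h𝒜L.1]
  · intro n
    by_cases hn : n ∈ S
    · simpa [hn] using h𝒜L.2.1 n
    · simpa [hn] using h𝒜L.1.empty_mem
  · intro m n hmn
    have := hH.2.1 hmn
    by_cases hm : m ∈ S <;> by_cases hn : n ∈ S <;> simp_all

/-! ### Existence of full conditional probabilities -/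

/-- Ultrafilter limits of ratios of finitely additive measures, eventually positive on each nonempty
set of the field, form a full conditional probability. -/
lemma exists_fcp_of_tendsto {α : Type*} (U : Ultrafilter α) {𝒜 : Set (Set Ω)}
    (h : IsSetField 𝒜) (m : α → Set Ω → ℝ)
    (hnn : ∀ᶠ p in (U : Filter α), ∀ A ∈ 𝒜, 0 ≤ m p A)
    (hadd : ∀ᶠ p in (U : Filter α), ∀ A ∈ 𝒜, ∀ B ∈ 𝒜, Disjoint A B →
      m p (A ∪ B) = m p A + m p B)
    (hpos : ∀ K ∈ 𝒜, K.Nonempty → ∀ᶠ p in (U : Filter α), 0 < m p K) :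
    ∃ P : Set Ω → Set Ω → ℝ, IsFCP 𝒜 P ∧ ∀ A ∈ 𝒜, ∀ K ∈ 𝒜, K.Nonempty →
      Tendsto (fun p => m p (A ∩ K) / m p K) U (𝓝 (P A K)) := by
  have hIcc : ∀ A ∈ 𝒜, ∀ K ∈ 𝒜, K.Nonempty → ∀ᶠ p in (U : Filter α),
      m p (A ∩ K) / m p K ∈ Set.Icc (0 : ℝ) 1 := by
    intro A hA K hK hKn
    filter_upwards [hnn, hadd, hpos K hK hKn] with p h1 h2 h3
    have h4 := h2 _ (h.inter_mem hA hK) _ (h.inter_mem (h.2.1 _ hA) hK)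
      (Set.disjoint_left.2 fun x hx hx' => hx'.1 hx.1)
    rw [← Set.union_inter_distrib_right, Set.union_compl_self, Set.univ_inter] at h4
    have h5 := h1 _ (h.inter_mem (h.2.1 _ hA) hK)
    have h6 := h1 _ (h.inter_mem hA hK)
    exact ⟨div_nonneg h6 h3.le, (div_le_one h3).2 (by linarith)⟩
  have hlim : ∀ A K : Set Ω, ∃ x : ℝ, A ∈ 𝒜 → K ∈ 𝒜 → K.Nonempty →
      Tendsto (fun p => m p (A ∩ K) / m p K) U (𝓝 x) := by
    intro A K
    by_cases hc : A ∈ 𝒜 ∧ K ∈ 𝒜 ∧ K.Nonempty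
    · obtain ⟨hA, hK, hKn⟩ := hc
      obtain ⟨x, -, hx⟩ := (isCompact_Icc (a := (0 : ℝ)) (b := 1)).ultrafilter_le_nhds
        (U.map fun p => m p (A ∩ K) / m p K)
        (by
          rw [Ultrafilter.coe_map, Filter.le_principal_iff]
          exact hIcc A hA K hK hKn)
      exact ⟨x, fun _ _ _ => hx⟩
    · exact ⟨0, fun hA hK hKn => absurd ⟨hA, hK, hKn⟩ hc⟩
  choose P hP using hlim
  refine ⟨P, ⟨?_, ?_, ?_⟩, fun A hA K hK hKn => hP A K hA hK hKn⟩
  · intro A hA K hK hKn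
    have h1 := hP (A ∩ K) K (h.inter_mem hA hK) hK hKn
    rw [Set.inter_assoc, Set.inter_self] at h1
    exact tendsto_nhds_unique (hP A K hA hK hKn) h1
  · intro K hK hKn
    refine ⟨fun A hA => ?_, ?_, fun A hA B hB hAB => ?_⟩
    · exact isClosed_Icc.mem_of_tendsto (hP A K hA hK hKn) (hIcc A hA K hK hKn)
    · refine tendsto_nhds_unique (hP Set.univ K h.1 hK hKn) (tendsto_const_nhds.congr' ?_)
      filter_upwards [hpos K hK hKn] with p hp
      rw [Set.univ_inter, div_self hp.ne']
    · refine tendsto_nhds_unique (hP (A ∪ B) K (h.2.2 _ hA _ hB) hK hKn)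
        (((hP A K hA hK hKn).add (hP B K hB hK hKn)).congr' ?_)
      filter_upwards [hadd] with p hp
      rw [Set.union_inter_distrib_right, hp _ (h.inter_mem hA hK) _ (h.inter_mem hB hK)
        (hAB.mono Set.inter_subset_left Set.inter_subset_left), add_div]
  · intro A hA B hB K hK hKn hAK
    have hAKm := h.inter_mem hA hK
    refine tendsto_nhds_unique (hP (A ∩ B) K (h.inter_mem hA hB) hK hKn)
      (((hP A K hA hK hKn).mul (hP B (A ∩ K) hB hAKm hAK)).congr' ?_)
    filter_upwards [hpos K hK hKn, hpos _ hAKm hAK] with p hp hp'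
    have e : B ∩ (A ∩ K) = A ∩ B ∩ K := by
      rw [← Set.inter_assoc, Set.inter_comm B A]
    rw [e]
    field_simp

/-- The normalized counting measure of a finite set of points (zero if that set is empty). -/
noncomputable def normCount (S : Finset Ω) (A : Set Ω) : ℝ :=
  ((S.filter (· ∈ A)).card : ℝ) / S.card

lemma normCount_nonneg (S : Finset Ω) (A : Set Ω) : 0 ≤ normCount S A := by
  unfold normCount; positivity

lemma normCount_le_one (S : Finset Ω) (A : Set Ω) : normCount S A ≤ 1 :=
  div_le_one_of_le₀ (by exact_mod_cast Finset.card_filter_le _ _) (by positivity)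

lemma normCount_union (S : Finset Ω) {A B : Set Ω} (hd : Disjoint A B) :
    normCount S (A ∪ B) = normCount S A + normCount S B := by
  unfold normCount
  rw [← add_div, ← Nat.cast_add, ← Finset.card_union_of_disjoint, ← Finset.filter_or]
  · simp only [Set.mem_union]
  · exact Finset.disjoint_filter.2 fun x _ hA hB => Set.disjoint_left.1 hd hA hB

lemma normCount_pos {S : Finset Ω} {A : Set Ω} {x : Ω} (hxS : x ∈ S) (hxA : x ∈ A) :
    0 < normCount S A := by
  have h1 : 0 < (S.filter (· ∈ A)).card :=
    Finset.card_pos.2 ⟨x, Finset.mem_filter.2 ⟨hxS, hxA⟩⟩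
  have h2 : 0 < S.card := Finset.card_pos.2 ⟨x, hxS⟩
  unfold normCount
  positivity

/-- Dubins' theorem for a countable partition and a countably additive prior. -/
lemma FCPSet_nonempty [Nonempty Ω] {𝒜 𝒜L : Set (Set Ω)} (h : IsSetField 𝒜) {H : ℕ → Set Ω}
    (hH : IsPartition H) (h𝒜L : IsFieldOver H 𝒜L) (hsub : 𝒜L ⊆ 𝒜) {π : Set Ω → ℝ}
    (hπ : IsFAP 𝒜L π) (hπc : CountablyAdditiveOn 𝒜L π) {σ : Set Ω → ℕ → ℝ}
    (hσ : IsStrategy 𝒜 H σ) : (FCPSet 𝒜 𝒜L H π σ).Nonempty := by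
  have hHm : ∀ i, H i ∈ 𝒜 := fun i => hsub (h𝒜L.2.1 i)
  have hμ := fun B hB => hasSum_prior (B := B) h hH h𝒜L hsub hπ hπc hσ hB
  have hσu : ∀ i, σ Set.univ i = 1 := fun i => (hσ i).1.2.1
  have hw : Summable fun i => π (H i) := by
    simpa [hσu] using (hμ _ h𝒜L.1.1).summable
  have hw0 : ∀ i, 0 ≤ π (H i) := fun i => (hπ.1 _ (h𝒜L.2.1 i)).1
  have hv : Summable fun i : ℕ => (1 / 2 : ℝ) ^ i := summable_geometric_two
  have hv0 : ∀ i : ℕ, (0 : ℝ) ≤ (1 / 2 : ℝ) ^ i := fun i => by positivity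
  set μ : Set Ω → ℝ := fun A => ∑' i, σ A i * π (H i) with hμdef
  set l : Set Ω → ℝ := fun A => ∑' i, σ A i * (1 / 2 : ℝ) ^ i with hldef
  set m : ℝ × Finset Ω → Set Ω → ℝ :=
    fun p A => μ A + p.1 * l A + p.1 ^ 2 * normCount p.2 A with hm
  set U : Ultrafilter (ℝ × Finset Ω) := Ultrafilter.of (𝓝[>] (0 : ℝ) ×ˢ atTop) with hUdef
  have hU : (U : Filter (ℝ × Finset Ω)) ≤ 𝓝[>] (0 : ℝ) ×ˢ atTop := Ultrafilter.of_le _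
  have hfst : Tendsto Prod.fst (U : Filter (ℝ × Finset Ω)) (𝓝[>] (0 : ℝ)) :=
    tendsto_fst.mono_left hU
  have hfst0 : Tendsto Prod.fst (U : Filter (ℝ × Finset Ω)) (𝓝 (0 : ℝ)) :=
    hfst.mono_right nhdsWithin_le_nhds
  have hε : ∀ᶠ p in (U : Filter (ℝ × Finset Ω)), 0 < p.1 :=
    hfst.eventually self_mem_nhdsWithin
  have hsnd : Tendsto Prod.snd (U : Filter (ℝ × Finset Ω)) atTop :=
    tendsto_snd.mono_left hU
  have hμ0 : ∀ A ∈ 𝒜, 0 ≤ μ A := fun A hA => hσ.tsum_nonneg hw0 hA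
  have hl0 : ∀ A ∈ 𝒜, 0 ≤ l A := fun A hA => hσ.tsum_nonneg hv0 hA
  obtain ⟨P, hP, hPlim⟩ := exists_fcp_of_tendsto U h m
    (by
      filter_upwards [hε] with p hp A hA
      have h1 := hμ0 A hA
      have h2 := hl0 A hA
      have h3 := normCount_nonneg p.2 A
      simp only [hm]
      positivity)
    (Eventually.of_forall fun p A hA B hB hd => by
      have h1 : μ (A ∪ B) = μ A + μ B := hσ.tsum_union hw hw0 hA hB hd
      have h2 : l (A ∪ B) = l A + l B := hσ.tsum_union hv hv0 hA hB hd
      simp only [hm]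
      rw [h1, h2, normCount_union p.2 hd]
      ring)
    (by
      rintro K hK ⟨x, hx⟩
      filter_upwards [hε, hsnd.eventually (eventually_ge_atTop {x})] with p hp hxp
      have h1 := hμ0 K hK
      have h2 := hl0 K hK
      have h3 := normCount_pos (Finset.singleton_subset_iff.1 hxp) hx
      simp only [hm]
      positivity)
  refine ⟨P, hP, fun B hB => ?_, fun F hF i => ?_⟩
  · have hmlim : ∀ A, Tendsto (fun p => m p A) U (𝓝 (μ A)) := by
      intro A
      have hb : Tendsto (fun p : ℝ × Finset Ω => p.1 ^ 2 * normCount p.2 A) U (𝓝 0) := by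
        refine squeeze_zero (fun p => mul_nonneg (sq_nonneg _) (normCount_nonneg _ _))
          (fun p => mul_le_of_le_one_right (sq_nonneg _) (normCount_le_one _ _)) ?_
        simpa using hfst0.pow 2
      simpa using (tendsto_const_nhds.add (hfst0.mul_const (l A))).add hb
    have hμu : μ Set.univ = 1 := (hμ _ h𝒜L.1.1).tsum_eq.trans hπ.2.1
    have hμB : μ B = π B := (hμ _ hB).tsum_eq
    have h1 := (hmlim B).div (hmlim Set.univ) (by rw [hμu]; exact one_ne_zero)
    rw [hμu, hμB, div_one] at h1
    have h2 := hPlim B (hsub hB) Set.univ h.1 Set.univ_nonempty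
    simp only [Set.inter_univ] at h2
    exact tendsto_nhds_unique h2 h1
  · have hlim : Tendsto (fun p => m p (F ∩ H i) / m p (H i)) U (𝓝 (σ F i)) := by
      have hσ1 := (hσ i).1.1 _ hF
      simp only at hσ1
      have hσH : σ (H i) i = 1 := (hσ i).2 _ (hHm i) subset_rfl
      have e : ∀ w : ℕ → ℝ, ∑' j, σ (H i) j * w j = w i := fun w => by
        have := hσ.tsum_inter h hH hHm w (hHm i) i
        rwa [Set.inter_self, hσH, one_mul] at this
      have e1 : μ (F ∩ H i) = σ F i * π (H i) := hσ.tsum_inter h hH hHm _ hF i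
      have e2 : l (F ∩ H i) = σ F i * (1 / 2) ^ i := hσ.tsum_inter h hH hHm _ hF i
      have e3 : μ (H i) = π (H i) := e _
      have e4 : l (H i) = (1 / 2) ^ i := e _
      rw [tendsto_iff_dist_tendsto_zero]
      have hz : Tendsto (fun p : ℝ × Finset Ω => p.1 * 2 ^ i) U (𝓝 0) := by
        simpa using hfst0.mul_const (2 ^ i : ℝ)
      refine squeeze_zero' (Eventually.of_forall fun p => dist_nonneg) ?_ hz
      filter_upwards [hε] with p hp
      -- Only the counting term deviates from proportionality to `σ F i`; it has size at most
      -- `ε ^ 2`, while `m p (H i)` is at least `ε * (1 / 2) ^ i`.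
      have hc0 := normCount_nonneg p.2 (H i)
      have hc1 := normCount_le_one p.2 (H i)
      have hd0 := normCount_nonneg p.2 (F ∩ H i)
      have hd1 := normCount_le_one p.2 (F ∩ H i)
      have hden : p.1 * (1 / 2) ^ i ≤ m p (H i) := by
        simp only [hm]
        rw [e3, e4]
        have := hw0 i
        have := mul_nonneg (sq_nonneg p.1) hc0
        linarith
      have hpp : 0 < p.1 * (1 / 2 : ℝ) ^ i := by positivity
      have hmpos : 0 < m p (H i) := hpp.trans_le hden
      have hdiff : m p (F ∩ H i) - m p (H i) * σ F i
          = p.1 ^ 2 * (normCount p.2 (F ∩ H i) - normCount p.2 (H i) * σ F i) := by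
        simp only [hm]
        rw [e1, e2, e3, e4]
        ring
      have habs : |normCount p.2 (F ∩ H i) - normCount p.2 (H i) * σ F i| ≤ 1 := by
        have := mul_nonneg hc0 hσ1.1
        have := mul_le_one₀ hc1 hσ1.1 hσ1.2
        rw [abs_le]
        constructor <;> linarith
      rw [Real.dist_eq, div_sub' hmpos.ne', hdiff, abs_div, abs_of_pos hmpos, abs_mul,
        abs_of_nonneg (sq_nonneg p.1), div_le_iff₀ hmpos]
      calc p.1 ^ 2 * |normCount p.2 (F ∩ H i) - normCount p.2 (H i) * σ F i|
          ≤ p.1 ^ 2 * 1 := by gcongr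
        _ = p.1 * 2 ^ i * (p.1 * (1 / 2) ^ i) := by
          have : (2 : ℝ) ^ i * (1 / 2) ^ i = 1 := by rw [← mul_pow]; norm_num
          linear_combination -(p.1 ^ 2) * this
        _ ≤ p.1 * 2 ^ i * m p (H i) := by gcongr
    exact tendsto_nhds_unique (hPlim F hF (H i) (hHm i) (hH.1 i)) hlim

/-! ### Uniqueness and countable additivity -/

lemma FCPSet_eq_tsum [Nonempty Ω] {𝒜 𝒜L : Set (Set Ω)} (h : IsSetField 𝒜) {H : ℕ → Set Ω}
    (hH : IsPartition H) (h𝒜L : IsFieldOver H 𝒜L) (hsub : 𝒜L ⊆ 𝒜) {π : Set Ω → ℝ}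
    {σ : Set Ω → ℕ → ℝ} (hfap : IsFAP 𝒜 fun F => ∑' i, σ F i * π (H i)) {P : Set Ω → Set Ω → ℝ}
    (hsum : ∀ F ∈ 𝒜, Summable fun i => σ F i * π (H i))
    (hP : P ∈ FCPSet 𝒜 𝒜L H π σ) {F : Set Ω} (hF : F ∈ 𝒜) :
    P F Set.univ = ∑' i, σ F i * π (H i) := by
  obtain ⟨⟨-, hP2, hP3⟩, hPπ, hPσ⟩ := hP
  have hHm : ∀ i, H i ∈ 𝒜 := fun i => hsub (h𝒜L.2.1 i)
  have hPf := hP2 _ h.1 Set.univ_nonempty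
  have hle : ∀ A ∈ 𝒜, ∑' i, σ A i * π (H i) ≤ P A Set.univ := by
    intro A hA
    refine (hsum A hA).tsum_le_of_sum_le fun s => ?_
    refine le_trans (le_of_eq (Finset.sum_congr rfl fun i _ => ?_))
      (hPf.sum_inter_le h hH hHm hA s)
    have h1 := hP3 _ (hHm i) _ hA _ h.1 Set.univ_nonempty (by simpa using hH.1 i)
    rw [Set.inter_univ, hPπ _ (h𝒜L.2.1 i), hPσ _ hA] at h1
    rw [h1, mul_comm]
  have h1 := hPf.compl h hF
  have h2 := hfap.compl h hF
  have h3 := hle _ hF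
  have h4 := hle _ (h.2.1 _ hF)
  linarith

lemma IsStrategy.countablyAdditive {𝒜 : Set (Set Ω)} {H : ℕ → Set Ω}
    {σ : Set Ω → ℕ → ℝ} (hσ : IsStrategy 𝒜 H σ) {w : ℕ → ℝ} (hw : Summable w)
    (hw0 : ∀ i, 0 ≤ w i) (hc : ∀ i, CountablyAdditiveOn 𝒜 fun F => σ F i) :
    CountablyAdditiveOn 𝒜 fun F => ∑' i, σ F i * w i := by
  intro A hA hd hU
  have hrow : ∀ i, HasSum (fun n => σ (A n) i * w i) (σ (⋃ n, A n) i * w i) :=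
    fun i => (hc i A hA hd hU).mul_right (w i)
  have hs : Summable fun p : ℕ × ℕ => σ (A p.2) p.1 * w p.1 := by
    rw [summable_prod_of_nonneg fun p => mul_nonneg ((hσ p.1).1.1 _ (hA p.2)).1 (hw0 p.1)]
    refine ⟨fun i => (hrow i).summable, ?_⟩
    simp only [fun i => (hrow i).tsum_eq]
    exact hσ.summable hw hw0 hU
  have ht : ∑' p : ℕ × ℕ, σ (A p.2) p.1 * w p.1 = ∑' i, σ (⋃ n, A n) i * w i :=
    (hs.hasSum.prod_fiberwise hrow).tsum_eq.symm
  have hswap := (Equiv.prodComm ℕ ℕ).hasSum_iff.2 hs.hasSum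
  rw [ht] at hswap
  exact hswap.prod_fiberwise fun n => (hσ.summable hw hw0 (hA n)).hasSum

/-- if `ℒ` is countably infinite and `π` is countably additive, then the
joint probability consistent with `{π, σ}` is unique and given by `∑ᵢ σ(F|Hᵢ)π(Hᵢ)`;
it is countably additive whenever every `σ(·|Hᵢ)` is. -/
theorem statement2 {Ω κ : Type*} [Nonempty Ω] (H : ℕ → Set Ω) (E : κ → Set Ω)
    (𝒜L 𝒜E 𝒜 : Set (Set Ω))
    (hH : IsPartition H) (hE : IsPartition E)
    (h𝒜L : IsFieldOver H 𝒜L) (h𝒜E : IsFieldOver E 𝒜E)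
    (h𝒜 : IsJointField H E 𝒜L 𝒜E 𝒜)
    (π : Set Ω → ℝ) (hπ : IsFAP 𝒜L π) (hπc : CountablyAdditiveOn 𝒜L π)
    (σ : Set Ω → ℕ → ℝ) (hσ : IsStrategy 𝒜 H σ) :
    (∀ P ∈ FCPSet 𝒜 𝒜L H π σ, ∀ F ∈ 𝒜, P F Set.univ = ∑' i, σ F i * π (H i)) ∧
    (∀ F ∈ 𝒜,
      lowEnv (FCPSet 𝒜 𝒜L H π σ) F Set.univ = ∑' i, σ F i * π (H i) ∧
      upEnv (FCPSet 𝒜 𝒜L H π σ) F Set.univ = ∑' i, σ F i * π (H i)) ∧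
    IsFAP 𝒜 (fun F => ∑' i, σ F i * π (H i)) ∧
    ((∀ i, CountablyAdditiveOn 𝒜 fun F => σ F i) →
      CountablyAdditiveOn 𝒜 fun F => ∑' i, σ F i * π (H i)) := by
  have h := h𝒜.1
  have hsub := h𝒜.2.1
  have hw0 : ∀ i, 0 ≤ π (H i) := fun i => (hπ.1 _ (h𝒜L.2.1 i)).1
  have htot := hasSum_prior h hH h𝒜L hsub hπ hπc hσ h𝒜L.1.1
  have hσu : ∀ i, σ Set.univ i = 1 := fun i => (hσ i).1.2.1
  have hw : Summable fun i => π (H i) := by simpa [hσu] using htot.summable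
  have hnn : ∀ F ∈ 𝒜, 0 ≤ ∑' i, σ F i * π (H i) := fun F hF => hσ.tsum_nonneg hw0 hF
  have hadd : ∀ A ∈ 𝒜, ∀ B ∈ 𝒜, Disjoint A B → ∑' i, σ (A ∪ B) i * π (H i)
      = ∑' i, σ A i * π (H i) + ∑' i, σ B i * π (H i) :=
    fun A hA B hB hd => hσ.tsum_union hw hw0 hA hB hd
  have huniv : ∑' i, σ Set.univ i * π (H i) = 1 := htot.tsum_eq.trans hπ.2.1
  have hfap : IsFAP 𝒜 (fun F => ∑' i, σ F i * π (H i)) := by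
    refine ⟨fun F hF => ⟨hnn F hF, ?_⟩, huniv, hadd⟩
    have h1 := hadd _ hF _ (h.2.1 _ hF) disjoint_compl_right
    rw [Set.union_compl_self, huniv] at h1
    linarith [hnn _ (h.2.1 _ hF)]
  have huniq : ∀ P ∈ FCPSet 𝒜 𝒜L H π σ, ∀ F ∈ 𝒜,
      P F Set.univ = ∑' i, σ F i * π (H i) := fun P hP F hF =>
    FCPSet_eq_tsum h hH h𝒜L hsub hfap (fun A hA => hσ.summable hw hw0 hA) hP hF
  refine ⟨huniq, fun F hF => ?_, hfap, fun hc => hσ.countablyAdditive hw hw0 hc⟩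
  have himg : (fun P : Set Ω → Set Ω → ℝ => P F Set.univ) '' FCPSet 𝒜 𝒜L H π σ
      = {∑' i, σ F i * π (H i)} := by
    rw [Set.image_congr fun P hP => huniq P hP F hF]
    exact (FCPSet_nonempty h hH h𝒜L hsub hπ hπc hσ).image_const _
  unfold lowEnv upEnv
  rw [himg]
  exact ⟨csInf_singleton _, csSup_singleton _⟩
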